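/- Let φ be a function holomorphic on the upper half-plane except for finitely many poles, with φ(z) → 0 as |z| → ∞ (in the closed upper half-plane), and suppose φ(iω_n) = 0 for all Matsubara frequencies ω_n = 2πn/β, n = 1, 2, 3, …. Then φ is identically zero on the upper half-plane. -/

import Mathlib

/-!
Choose `R ≥ 0` at least the norm of every pole and such that `‖φ z‖ < 1` for `z` in the closed upper
half-plane with `‖z‖ > R`. Then `g z = φ (i (z + R))` is holomorphic and bounded by `1` on the right
half-plane, and it vanishes at
the positive reals `2πn/β - R` for all large `n`.

The Schwarz lemma, transported to the right half-plane by a Cayley transform, lets one divide `g` by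
the factors `(z - a) / (z + a)` attached to finitely many zeros `a` without increasing the bound, so
`‖g z‖ ≤ ∏ ‖z - a‖ / ‖z + a‖` (`norm_le_blaschke_prod`). At a real point `x > 0` each factor with
`a ≥ x` is at most `exp (-2x / (a + x))`, and since the harmonic series diverges the product over
the zeros `2πn/β - R` tends to `0`; hence `g x = 0` (`eq_zero_of_arithmetic_zeros`).

So `φ` vanishes on the imaginary axis above height `R`, and the identity theorem on the upper
half-plane minus the finite set `S`, which is connected (`isPreconnected_upperHalf_diff`), shows that
`φ` vanishes there.
-/

open Complex Filter Set Topology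

/-- Schwarz lemma on the right half-plane, for a zero at the real point `a`. -/
lemma norm_le_of_zero_rightHalfPlane {g : ℂ → ℂ} (hd : DifferentiableOn ℂ g {z : ℂ | 0 < z.re})
    (hb : ∀ z : ℂ, 0 < z.re → ‖g z‖ ≤ 1) {a : ℝ} (ha : 0 < a) (h0 : g a = 0) {z : ℂ}
    (hz : 0 < z.re) : ‖g z‖ ≤ ‖z - a‖ / ‖z + a‖ := by
  have hza : z + a ≠ 0 := fun h => by
    have := congrArg Complex.re h
    simp at this
    linarith
  -- The Cayley transform from the unit disc onto the right half-plane taking `0` to `a`.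
  set M : ℂ → ℂ := fun w => a * (1 + w) / (1 - w) with hM
  have hne : ∀ w ∈ Metric.ball (0 : ℂ) 1, 1 - w ≠ 0 := fun w hw h => by
    have : w = 1 := (sub_eq_zero.mp h).symm
    simp [this] at hw
  have hMre : ∀ w ∈ Metric.ball (0 : ℂ) 1, 0 < (M w).re := fun w hw => by
    have h1 : 0 < Complex.normSq (1 - w) := Complex.normSq_pos.mpr (hne w hw)
    have h2 : Complex.normSq w < 1 := by
      rw [Complex.normSq_eq_norm_sq]
      have : ‖w‖ < 1 := by simpa using hw
      nlinarith [norm_nonneg w]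
    have h3 : (M w).re = a * (1 - Complex.normSq w) / Complex.normSq (1 - w) := by
      simp only [hM, Complex.div_re, Complex.mul_re, Complex.mul_im, Complex.add_re, Complex.add_im,
        Complex.sub_re, Complex.sub_im, Complex.one_re, Complex.one_im, Complex.ofReal_re,
        Complex.ofReal_im]
      rw [← add_div]
      congr 1
      rw [Complex.normSq_apply w]
      ring
    rw [h3]
    exact div_pos (mul_pos ha (by linarith)) h1
  have hMd : DifferentiableOn ℂ M (Metric.ball 0 1) := by
    refine DifferentiableOn.div ?_ ?_ hne <;> fun_prop
  have hw : ‖(z - a) / (z + a)‖ < 1 := by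
    rw [norm_div, div_lt_one (norm_pos_iff.mpr hza)]
    rw [← sq_lt_sq₀ (norm_nonneg _) (norm_nonneg _), ← Complex.normSq_eq_norm_sq,
      ← Complex.normSq_eq_norm_sq, Complex.normSq_apply, Complex.normSq_apply]
    simp only [Complex.sub_re, Complex.sub_im, Complex.add_re, Complex.add_im, Complex.ofReal_re,
      Complex.ofReal_im]
    nlinarith [mul_pos ha hz]
  have key := Complex.norm_le_norm_of_mapsTo_ball (f := g ∘ M) (R := 1)
    (hd.comp hMd hMre) (fun w hw => by simpa using hb _ (hMre w hw)) (by simpa [hM] using h0) hw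
  have hMz : M ((z - a) / (z + a)) = z := by
    have ha' : (a : ℂ) ≠ 0 := by exact_mod_cast ha.ne'
    have e1 : 1 + (z - a) / (z + a) = 2 * z / (z + a) := by field_simp; ring
    have e2 : 1 - (z - a) / (z + a) = 2 * a / (z + a) := by field_simp; ring
    simp only [hM]
    rw [e1, e2]
    field_simp
  rwa [Function.comp_apply, hMz, norm_div] at key

/-- A function bounded by `1` on the right half-plane is dominated by the finite Blaschke product
over any finite set of its positive real zeros. -/
lemma norm_le_blaschke_prod (T : Finset ℝ) : ∀ (g : ℂ → ℂ),
    DifferentiableOn ℂ g {z : ℂ | 0 < z.re} → (∀ z : ℂ, 0 < z.re → ‖g z‖ ≤ 1) →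
    (∀ a ∈ T, 0 < a) → (∀ a ∈ T, g (a : ℂ) = 0) →
    ∀ z : ℂ, 0 < z.re → ‖g z‖ ≤ ∏ a ∈ T, ‖z - a‖ / ‖z + a‖ := by
  induction T using Finset.induction_on with
  | empty => intro g _ hb _ _ z hz; simpa using hb z hz
  | insert a T haT ih =>
    intro g hd hb hpos h0 z hz
    have ha : 0 < a := hpos a (Finset.mem_insert_self _ _)
    have hga : g a = 0 := h0 a (Finset.mem_insert_self _ _)
    have hopen : IsOpen {z : ℂ | 0 < z.re} := isOpen_lt continuous_const Complex.continuous_re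
    have hza : ∀ z : ℂ, 0 < z.re → z + a ≠ 0 := fun z hz h => by
      have := congrArg Complex.re h
      simp at this
      linarith
    have hnhds : {z : ℂ | 0 < z.re} ∈ 𝓝 (a : ℂ) := hopen.mem_nhds (by simpa using ha)
    -- The quotient of `g` by the factor `(z - a) / (z + a)`, with the singularity removed.
    set h : ℂ → ℂ := fun z => dslope g a z * (z + a) with hh
    have hhd : DifferentiableOn ℂ h {z : ℂ | 0 < z.re} :=
      ((Complex.differentiableOn_dslope hnhds).mpr hd).mul (by fun_prop)
    have hval : ∀ z : ℂ, z ≠ a → h z = g z * (z + a) / (z - a) := fun z hz => by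
      simp only [hh, dslope_of_ne _ hz, slope_def_field, hga]
      ring
    have hle : ∀ z : ℂ, 0 < z.re → z ≠ a → ‖h z‖ ≤ 1 := fun z hz hne => by
      have := norm_le_of_zero_rightHalfPlane hd hb ha hga hz
      have p1 : 0 < ‖z + a‖ := norm_pos_iff.mpr (hza z hz)
      have p2 : 0 < ‖z - a‖ := norm_pos_iff.mpr (sub_ne_zero.mpr hne)
      rw [hval z hne, norm_div, norm_mul, div_le_one p2]
      rwa [le_div_iff₀ p1] at this
    have hhb : ∀ z : ℂ, 0 < z.re → ‖h z‖ ≤ 1 := fun z hz => by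
      by_cases hne : z = a
      · subst hne
        have hc : Tendsto (fun w => ‖h w‖) (𝓝[≠] (a : ℂ)) (𝓝 ‖h a‖) :=
          ((hhd.differentiableAt hnhds).continuousAt.norm.tendsto).mono_left nhdsWithin_le_nhds
        refine le_of_tendsto hc ?_
        filter_upwards [self_mem_nhdsWithin, mem_nhdsWithin_of_mem_nhds hnhds] with w h1 h2
        exact hle w h2 h1
      · exact hle z hz hne
    have hh0 : ∀ b ∈ T, h (b : ℂ) = 0 := fun b hb => by
      have hba : (b : ℂ) ≠ a := fun e => haT (by rw [← Complex.ofReal_injective e]; exact hb)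
      rw [hval _ hba, h0 b (Finset.mem_insert_of_mem hb)]
      simp
    have hT := ih h hhd hhb (fun b hb => hpos b (Finset.mem_insert_of_mem hb)) hh0 z hz
    rw [Finset.prod_insert haT]
    by_cases hne : z = a
    · subst hne
      simp [hga]
    · have p1 : ‖z + a‖ ≠ 0 := norm_ne_zero_iff.mpr (hza z hz)
      have p2 : ‖z - a‖ ≠ 0 := norm_ne_zero_iff.mpr (sub_ne_zero.mpr hne)
      have : ‖g z‖ = ‖z - a‖ / ‖z + a‖ * ‖h z‖ := by
        rw [hval z hne, norm_div, norm_mul]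
        field_simp
      rw [this]
      exact mul_le_mul_of_nonneg_left hT (by positivity)

/-- A bounded holomorphic function on the right half-plane vanishing at all positive points of an
arithmetic progression vanishes on the positive real axis. -/
lemma eq_zero_of_arithmetic_zeros {g : ℂ → ℂ} (hd : DifferentiableOn ℂ g {z : ℂ | 0 < z.re})
    (hb : ∀ z : ℂ, 0 < z.re → ‖g z‖ ≤ 1) {c R : ℝ} (hc : 0 < c) (hR : 0 ≤ R)
    (h0 : ∀ n : ℕ, 0 < c * n - R → g ((c * n - R : ℝ) : ℂ) = 0) {x : ℝ} (hx : 0 < x) :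
    g x = 0 := by
  obtain ⟨N, hN⟩ := exists_nat_gt ((R + x) / c)
  rw [div_lt_iff₀ hc] at hN
  -- The zeros beyond `x`, re-indexed from `0`.
  set a : ℕ → ℝ := fun k => c * ((N + k : ℕ) : ℝ) - R with ha
  have hax : ∀ k, x < a k := fun k => by
    simp only [ha]
    push_cast
    nlinarith [mul_nonneg hc.le (Nat.cast_nonneg (α := ℝ) k)]
  have hinj : Function.Injective a := fun i j hij => by
    simp only [ha, sub_left_inj] at hij
    have := mul_left_cancel₀ hc.ne' hij
    have : N + i = N + j := by exact_mod_cast this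
    omega
  -- `a k + x ≤ D * (k + 1)` compares the Blaschke sum with the harmonic series.
  set D : ℝ := c * (N + 1) + x with hD
  have hDpos : 0 < D := by positivity
  have hbound : ∀ m : ℕ,
      ‖g x‖ ≤ Real.exp (-(2 * x / D * ∑ k ∈ Finset.range m, (1 / ((k : ℝ) + 1)))) := fun m => by
    have h1 := norm_le_blaschke_prod ((Finset.range m).image a) g hd hb
      (by
        intro b hb
        obtain ⟨k, -, rfl⟩ := Finset.mem_image.mp hb
        exact hx.trans (hax k))
      (by
        intro b hb
        obtain ⟨k, -, rfl⟩ := Finset.mem_image.mp hb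
        exact h0 (N + k) (hx.trans (hax k))) x (by simpa using hx)
    rw [Finset.prod_image (fun i _ j _ h => hinj h)] at h1
    refine h1.trans ?_
    rw [Finset.mul_sum, ← Finset.sum_neg_distrib, Real.exp_sum]
    refine Finset.prod_le_prod (fun _ _ => by positivity) fun k _ => ?_
    have hk := hax k
    have hs : 0 < x + a k := by linarith
    have e : ‖(x : ℂ) - a k‖ / ‖(x : ℂ) + a k‖ = 1 - 2 * x / (x + a k) := by
      rw [← Complex.ofReal_sub, ← Complex.ofReal_add, Complex.norm_real, Complex.norm_real,
        Real.norm_eq_abs, Real.norm_eq_abs, abs_of_pos hs, abs_of_neg (by linarith)]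
      field_simp
      ring
    have hcmp : x + a k ≤ D * (k + 1) := by
      simp only [ha, hD]
      push_cast
      have : (0 : ℝ) ≤ k := Nat.cast_nonneg k
      have : (0 : ℝ) ≤ N := Nat.cast_nonneg N
      nlinarith [mul_nonneg hc.le (mul_nonneg ‹(0 : ℝ) ≤ k› ‹(0 : ℝ) ≤ N›),
        mul_nonneg hx.le ‹(0 : ℝ) ≤ k›]
    have hfrac : 2 * x / D * (1 / ((k : ℝ) + 1)) ≤ 2 * x / (x + a k) := by
      rw [div_mul_div_comm, mul_one]
      exact div_le_div_of_nonneg_left (by positivity) hs hcmp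
    rw [e]
    have := Real.add_one_le_exp (-(2 * x / D * (1 / ((k : ℝ) + 1))))
    linarith
  have hlim : Tendsto
      (fun m : ℕ => Real.exp (-(2 * x / D * ∑ k ∈ Finset.range m, (1 / ((k : ℝ) + 1)))))
      atTop (𝓝 0) :=
    Real.tendsto_exp_neg_atTop_nhds_zero.comp
      (Real.tendsto_sum_range_one_div_nat_succ_atTop.const_mul_atTop (by positivity))
  exact norm_le_zero_iff.mp (ge_of_tendsto' hlim hbound)

lemma isPreconnected_upperHalf_diff (S : Finset ℂ) :
    IsPreconnected ({z : ℂ | 0 < z.im} \ (S : Set ℂ)) := by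
  -- `x + iy ↦ x + i exp y` is a homeomorphism from the plane onto the upper half-plane, and the
  -- plane remains connected when a finite set is removed.
  set ψ : ℂ → ℂ := fun z => ⟨z.re, Real.exp z.im⟩ with hψ
  have hcont : Continuous ψ := by
    have : ψ = fun z => (z.re : ℂ) + (Real.exp z.im : ℂ) * Complex.I := by
      funext z
      apply Complex.ext <;> simp [hψ, -Complex.ofReal_exp]
    rw [this]
    fun_prop
  have hinj : Function.Injective ψ := fun z w h => by
    have h1 := congrArg Complex.re h
    have h2 := congrArg Complex.im h
    exact Complex.ext h1 (Real.exp_injective h2)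
  have hcount : (ψ ⁻¹' (S : Set ℂ)).Countable :=
    (S.finite_toSet.preimage hinj.injOn).countable
  have hpre := (hcount.isConnected_compl_of_one_lt_rank (by simp)).isPreconnected.image ψ
    hcont.continuousOn
  convert hpre using 1
  ext z
  constructor
  · rintro ⟨hz, hzS⟩
    have hz' : (0 : ℝ) < z.im := hz
    have e : ψ ⟨z.re, Real.log z.im⟩ = z := Complex.ext rfl (Real.exp_log hz')
    exact ⟨⟨z.re, Real.log z.im⟩, fun h => hzS (by rw [← e]; exact h), e⟩
  · rintro ⟨w, hw, rfl⟩
    exact ⟨Real.exp_pos _, hw⟩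

/-- Carleman-type vanishing theorem: a function holomorphic on the upper half-plane
except for finitely many poles, vanishing at infinity in the closed upper half-plane,
and vanishing at all Matsubara frequencies, is identically zero. -/
theorem matsubara_vanishing (β : ℝ) (hβ : 0 < β) (φ : ℂ → ℂ) (S : Finset ℂ)
    (hS : ∀ s ∈ S, 0 < s.im)
    (hol : DifferentiableOn ℂ φ ({z : ℂ | 0 < z.im} \ (S : Set ℂ)))
    (hpole : ∀ s ∈ S,
      Tendsto (fun z => ‖φ z‖) (𝓝[{z : ℂ | 0 < z.im} \ (S : Set ℂ)] s) atTop)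
    (hdecay : ∀ ε > 0, ∃ R : ℝ, ∀ z : ℂ, 0 ≤ z.im → R < ‖z‖ → ‖φ z‖ < ε)
    (hzero : ∀ n : ℕ, 0 < n → φ (Complex.I * (2 * Real.pi * n / β)) = 0) :
    ∀ z : ℂ, 0 < z.im → z ∉ S → φ z = 0 := by
  obtain ⟨R₀, hR₀⟩ := hdecay 1 one_pos
  set R : ℝ := max R₀ (∑ s ∈ S, ‖s‖) with hRdef
  have hR : 0 ≤ R := (Finset.sum_nonneg fun s _ => norm_nonneg s).trans (le_max_right _ _)
  have hSR : ∀ s ∈ S, ‖s‖ ≤ R := fun s hs =>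
    (Finset.single_le_sum (f := fun s : ℂ => ‖s‖) (fun s _ => norm_nonneg s) hs).trans
      (le_max_right _ _)
  have him : ∀ z : ℂ, (Complex.I * (z + R)).im = z.re + R := fun z => by simp
  have hnorm : ∀ z : ℂ, 0 < z.re → R < ‖Complex.I * (z + R)‖ := fun z hz => by
    have := (le_abs_self _).trans (Complex.abs_im_le_norm (Complex.I * (z + R)))
    rw [him] at this
    linarith
  have hmaps : ∀ z : ℂ, 0 < z.re →
      Complex.I * (z + R) ∈ {z : ℂ | 0 < z.im} \ (S : Set ℂ) := fun z hz => by
    refine ⟨?_, fun h => absurd (hSR _ h) (not_le.mpr (hnorm z hz))⟩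
    change 0 < (Complex.I * (z + R)).im
    rw [him]
    linarith
  have hpos : ∀ x : ℝ, 0 < x → φ (Complex.I * (x + R)) = 0 := fun x hx => by
    refine eq_zero_of_arithmetic_zeros (g := fun z => φ (Complex.I * (z + R)))
      (c := 2 * Real.pi / β) (R := R) (hol.comp (by fun_prop) hmaps) (fun z hz => ?_)
      (by positivity) hR (fun n hn => ?_) hx
    · exact (hR₀ _ (hmaps z hz).1.le ((le_max_left _ _).trans_lt (hnorm z hz))).le
    · have hn0 : 0 < n := by
        rcases Nat.eq_zero_or_pos n with rfl | h
        · simp at hn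
          linarith
        · exact h
      have := hzero n hn0
      convert this using 2
      push_cast
      ring
  have hopen : IsOpen ({z : ℂ | 0 < z.im} \ (S : Set ℂ)) :=
    (isOpen_lt continuous_const Complex.continuous_im).sdiff S.finite_toSet.isClosed
  have hmem : Complex.I * (((1 : ℝ) : ℂ) + R) ∈ {z : ℂ | 0 < z.im} \ (S : Set ℂ) :=
    hmaps _ (by simp)
  -- The zeros `i (x + R)` with `x ↓ 1` accumulate at `i (1 + R)`.
  have hfreq : ∃ᶠ z in 𝓝[≠] (Complex.I * (((1 : ℝ) : ℂ) + R)), φ z = 0 := by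
    have ht : Tendsto (fun x : ℝ => Complex.I * ((x : ℂ) + R)) (𝓝[>] (1 : ℝ))
        (𝓝[≠] (Complex.I * (((1 : ℝ) : ℂ) + R))) := by
      refine tendsto_nhdsWithin_iff.mpr ⟨?_, ?_⟩
      · have hc : Continuous (fun x : ℝ => Complex.I * ((x : ℂ) + R)) := by fun_prop
        exact (hc.tendsto 1).mono_left nhdsWithin_le_nhds
      · filter_upwards [self_mem_nhdsWithin] with x hx h
        have := congrArg Complex.im h
        rw [him, him] at this
        simp at this
        exact (ne_of_gt hx) this
    refine ht.frequently (Eventually.frequently ?_)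
    filter_upwards [self_mem_nhdsWithin] with x hx
    exact hpos x (one_pos.trans hx)
  intro z hz hzS
  exact (hol.analyticOnNhd hopen).eqOn_zero_of_preconnected_of_frequently_eq_zero
    (isPreconnected_upperHalf_diff S) hmem hfreq ⟨hz, hzS⟩
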